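/- Let (A,B) be an invertible Jones pair of n×n complex matrices with A symmetric. Let F, F₁ ∈ N_A, let G, G₁, H, H₁ ∈ N_{A,B}, and let K, K₁ be paired with H, H₁ respectively. Then the matrix product M(F,G,H)·M(F₁,G₁,H₁) equals M(2n·F∘F₁ + 2n·G∘G₁, 2n·F∘G₁ + 2n·G∘F₁, 2HH₁), where 2n·F∘F₁ + 2n·G∘G₁ ∈ N_A, 2n·F∘G₁ + 2n·G∘F₁ ∈ N_{A,B}, 2HH₁ ∈ N_{A,B}, and the matrix 2KK₁ is paired with 2HH₁ (and is the K-block of the product). Moreover M(F,G,H)·M(F₁,G₁,H₁) = M(F₁,G₁,H₁)·M(F,G,H). -/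

import Mathlib

open Matrix

variable {m : Type*} [Fintype m] [DecidableEq m]

/-- The Schur (entrywise) inverse `A^(-)` of a matrix: `(A^(-))_{ij} = (A_{ij})⁻¹`. -/
noncomputable def sinv (A : Matrix m m ℂ) : Matrix m m ℂ := Matrix.of fun i j => (A i j)⁻¹

/-- A type-II matrix: a Schur invertible matrix `W` with `W * (W^(-))ᵀ = n • I`,
where `n` is the size of the matrix. -/
def IsTypeII (A : Matrix m m ℂ) : Prop :=
  (∀ i j, A i j ≠ 0) ∧ A * (sinv A)ᵀ = (Fintype.card m : ℂ) • (1 : Matrix m m ℂ)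

/-- `v_{ij} = (A e_i) ∘ (B e_j)`: the entrywise product of column `i` of `A`
with column `j` of `B`. -/
def colProd (A B : Matrix m m ℂ) (i j : m) : m → ℂ := fun k => A k i * B k j

/-- Membership in the Nomura algebra `N_{A,B}`: every `v_{ij}` is an eigenvector of `M`. -/
def InNomura (A B M : Matrix m m ℂ) : Prop :=
  ∀ i j, ∃ c : ℂ, M.mulVec (colProd A B i j) = c • colProd A B i j

/-- `S = Θ_{A,B}(M)`: the matrix of eigenvalues, i.e. `M v_{ij} = S_{ij} v_{ij}` for all `i,j`. -/
def IsTheta (A B M S : Matrix m m ℂ) : Prop :=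
  ∀ i j, M.mulVec (colProd A B i j) = S i j • colProd A B i j

/-- `(A,B)` is a Jones pair: `A` invertible, `B` Schur invertible, and
`X_A Δ_B X_A = Δ_B X_A Δ_B` and `X_A Δ_{Bᵀ} X_A = Δ_{Bᵀ} X_A Δ_{Bᵀ}`
as operators on matrices. -/
def IsJonesPair (A B : Matrix m m ℂ) : Prop :=
  IsUnit A ∧ (∀ i j, B i j ≠ 0) ∧
  (∀ M : Matrix m m ℂ, A * (B ⊙ (A * M)) = B ⊙ (A * (B ⊙ M))) ∧
  (∀ M : Matrix m m ℂ, A * (Bᵀ ⊙ (A * M)) = Bᵀ ⊙ (A * (Bᵀ ⊙ M)))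

/-- An invertible Jones pair: a Jones pair in which moreover `A` is Schur
invertible and `B` is invertible. -/
def IsInvertibleJonesPair (A B : Matrix m m ℂ) : Prop :=
  IsJonesPair A B ∧ (∀ i j, A i j ≠ 0) ∧ IsUnit B

/-- `W` is a spin model: for some `d` with `d² = n`, `(d⁻¹ W, W^(-))` is an
invertible Jones pair. -/
def IsSpinModel (W : Matrix m m ℂ) : Prop :=
  ∃ d : ℂ, d ^ 2 = (Fintype.card m : ℂ) ∧ IsInvertibleJonesPair (d⁻¹ • W) (sinv W)

/-- Given an invertible Jones pair `(A,B)` with `A` symmetric, `K` is paired with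
`H ∈ N_{A,B}` if `Kᵀ ∈ N_{A,Bᵀ}` and `Θ_{A,B}(H) = (Θ_{A,Bᵀ}(Kᵀ))ᵀ`. -/
def Paired (A B H K : Matrix m m ℂ) : Prop :=
  ∃ S : Matrix m m ℂ, IsTheta A B H S ∧ IsTheta A Bᵀ Kᵀ Sᵀ

/-- The `4n × 4n` matrix with `4 × 4` block structure
`[[P, Q, R, R], [Q, P, R, R], [S, S, T, U], [S, S, U, T]]`. -/
def blockMat {n : ℕ} (P Q R S T U : Matrix (Fin n) (Fin n) ℂ) :
    Matrix (Fin 4 × Fin n) (Fin 4 × Fin n) ℂ :=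
  Matrix.of fun x y =>
    (![![P, Q, R, R], ![Q, P, R, R], ![S, S, T, U], ![S, S, U, T]] x.1 y.1) x.2 y.2

/-- Yamada's `4n × 4n` matrix `V` built from `A`, `B` and `d` with `d² = n`. -/
noncomputable def Vmat {n : ℕ} (A B : Matrix (Fin n) (Fin n) ℂ) (d : ℂ) :
    Matrix (Fin 4 × Fin n) (Fin 4 × Fin n) ℂ :=
  blockMat (d • A) (-(d • A)) (sinv B) (sinv B)ᵀ (d • A) (-(d • A))

/-!
For type-II `P`, the equation `S = Θ_{P,Q}(M)` holds iff `S`, acting on row vectors, sends the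
quotient of rows `k`, `l` of `P` to `n M_{kl}` times the quotient of rows `l`, `k` of `Q`.
Replacing `Q` by `Q^(-)` exchanges `k` and `l` in the latter, so these matrices compose:
`Θ_{P,Q^(-)}(M) Θ_{Q,R^(-)}(N) = n Θ_{P,R^(-)}(M ∘ N)`. The parts of the blocks of `M(F,G,H)` that
come from `F` and `G` are the matrices `Θ_{P,Q^(-)}` of `F` (if `P = Q`) or of `G` (if `P ≠ Q`),
where `P` and `Q` range over `A` and `B^(-)`; since `∘` is commutative, so is their
multiplication. The parts `±H`, `±K` cancel against these, and `H` commutes with `H₁`, `K` with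
`K₁`, since they share bases of eigenvectors.

The matrices of an invertible Jones pair are type II: if `D` and `E` are the diagonal matrices of
two columns of `B`, then `A D A⁻¹ = D⁻¹ A D`. Comparing diagonals shows that `A ∘ (A⁻¹)ᵀ` has rank
one, and its row and column sums are `1`, so it is constant. Now `X = A D E⁻¹ A⁻¹` satisfies
`D X = X E` and has constant diagonal, the multiple `1/n` of the sum of the quotients of the two
columns. As the columns differ, that sum is `0`.
-/

section SchurInverse

variable {ι : Type*}

theorem sinv_sinv (A : Matrix ι ι ℂ) : sinv (sinv A) = A := by
  ext i j
  simp [sinv]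

theorem sinv_ne_zero {A : Matrix ι ι ℂ} (hA : ∀ i j, A i j ≠ 0) (i j : ι) : sinv A i j ≠ 0 :=
  inv_ne_zero (hA i j)

/-- The entrywise quotient of rows `k` and `l` of `P`; for type-II `P`, the row action of
`Θ_{P,Q}(M)` sends it to a multiple of the quotient of rows `l` and `k` of `Q`. -/
noncomputable def rowQuot (P : Matrix ι ι ℂ) (k l : ι) : ι → ℂ := fun i => P k i * (P l i)⁻¹

theorem rowQuot_sinv (P : Matrix ι ι ℂ) (k l : ι) : rowQuot (sinv P) k l = rowQuot P l k := by
  ext i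
  simp [rowQuot, sinv, mul_comm]

end SchurInverse

section Theta

variable {ι : Type*} [Fintype ι] {P Q M N S T : Matrix ι ι ℂ}

theorem IsTheta.inNomura (h : IsTheta P Q M S) : InNomura P Q M := fun i j => ⟨S i j, h i j⟩

theorem IsTheta.swap (h : IsTheta P Q M S) : IsTheta Q P M Sᵀ := fun i j => by
  have hcomm : colProd Q P i j = colProd P Q j i := funext fun k => mul_comm _ _
  rw [hcomm]
  exact h j i

theorem IsTheta.add (hM : IsTheta P Q M S) (hN : IsTheta P Q N T) :
    IsTheta P Q (M + N) (S + T) := fun i j => by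
  rw [add_mulVec, hM i j, hN i j, ← add_smul, Matrix.add_apply]

theorem IsTheta.smul (c : ℂ) (h : IsTheta P Q M S) : IsTheta P Q (c • M) (c • S) := fun i j => by
  rw [smul_mulVec, h i j, smul_smul, Matrix.smul_apply, smul_eq_mul]

theorem IsTheta.mul (hM : IsTheta P Q M S) (hN : IsTheta P Q N T) :
    IsTheta P Q (M * N) (S ⊙ T) := fun i j => by
  rw [← mulVec_mulVec, hN i j, mulVec_smul, hM i j, smul_smul, hadamard_apply, mul_comm]

theorem IsTheta.right_unique (hP : ∀ i j, P i j ≠ 0) (hQ : ∀ i j, Q i j ≠ 0)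
    (hS : IsTheta P Q M S) (hT : IsTheta P Q M T) : S = T := by
  ext i j
  have hv : S i j * (P i i * Q i j) = T i j * (P i i * Q i j) :=
    congrFun ((hS i j).symm.trans (hT i j)) i
  exact mul_right_cancel₀ (mul_ne_zero (hP i i) (hQ i j)) hv

theorem isTheta_iff_mul_diagonal_mul [DecidableEq ι] : IsTheta P Q M S ↔
    ∀ j, M * diagonal (Q.col j) * P = diagonal (Q.col j) * P * diagonal (S.col j) := by
  have hleft : ∀ i j k, (M * diagonal (Q.col j) * P) k i = (M *ᵥ colProd P Q i j) k := by
    intro i j k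
    rw [Matrix.mul_apply]
    exact Finset.sum_congr rfl fun l _ => by
      rw [mul_diagonal, col_apply, mul_assoc, mul_comm (Q l j), colProd]
  have hright : ∀ i j k, (diagonal (Q.col j) * P * diagonal (S.col j)) k i =
      (S i j • colProd P Q i j) k := by
    intro i j k
    rw [mul_diagonal, diagonal_mul, col_apply, col_apply, Pi.smul_apply, smul_eq_mul, colProd,
      mul_comm, mul_comm (Q k j)]
  simp only [IsTheta, funext_iff, ← Matrix.ext_iff, hleft, hright]
  exact ⟨fun h j k i => h i j k, fun h i j k => h j k i⟩

end Theta

section TypeII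

variable {ι : Type*} [Fintype ι] [DecidableEq ι] {P Q R M N S T : Matrix ι ι ℂ}

theorem mul_eq_card_smul_one_comm :
    P * Q = (Fintype.card ι : ℂ) • (1 : Matrix ι ι ℂ) ↔
      Q * P = (Fintype.card ι : ℂ) • (1 : Matrix ι ι ℂ) := by
  cases isEmpty_or_nonempty ι
  · exact iff_of_true (Subsingleton.elim _ _) (Subsingleton.elim _ _)
  · have hn : (Fintype.card ι : ℂ) ≠ 0 := Nat.cast_ne_zero.mpr Fintype.card_ne_zero
    rw [← inv_smul_eq_iff₀ hn, ← inv_smul_eq_iff₀ hn, ← Matrix.smul_mul, mul_eq_one_comm,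
      Matrix.mul_smul]

theorem isTypeII_sinv (hP : IsTypeII P) : IsTypeII (sinv P) := by
  refine ⟨sinv_ne_zero hP.1, ?_⟩
  rw [sinv_sinv]
  simpa [transpose_mul] using congrArg transpose hP.2

theorem IsTypeII.isUnit (hP : IsTypeII P) : IsUnit P := by
  cases isEmpty_or_nonempty ι
  · exact isUnit_of_subsingleton P
  · have hn : (Fintype.card ι : ℂ) ≠ 0 := Nat.cast_ne_zero.mpr Fintype.card_ne_zero
    refine IsUnit.of_mul_eq_one ((Fintype.card ι : ℂ)⁻¹ • (sinv P)ᵀ) ?_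
    rw [Matrix.mul_smul, hP.2, inv_smul_smul₀ hn]

theorem IsTypeII.mul_eq_iff (hP : IsTypeII P) {X Y : Matrix ι ι ℂ} :
    X * P = Y ↔ Y * (sinv P)ᵀ = (Fintype.card ι : ℂ) • X := by
  have hunit : IsUnit (sinv P)ᵀ := (isUnit_transpose _).mpr (isTypeII_sinv hP).isUnit
  rw [← hunit.mul_left_inj, Matrix.mul_assoc, hP.2, Matrix.mul_smul, Matrix.mul_one, eq_comm]

theorem IsTypeII.isTheta_iff_rowQuot_vecMul (hP : IsTypeII P) (hQ : ∀ i j, Q i j ≠ 0) :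
    IsTheta P Q M S ↔
      ∀ k l, rowQuot P k l ᵥ* S = ((Fintype.card ι : ℂ) * M k l) • rowQuot Q l k := by
  have entry : ∀ j k l,
      (diagonal (Q.col j) * P * diagonal (S.col j) * (sinv P)ᵀ) k l =
          ((Fintype.card ι : ℂ) • (M * diagonal (Q.col j))) k l ↔
        (rowQuot P k l ᵥ* S) j = (((Fintype.card ι : ℂ) * M k l) • rowQuot Q l k) j := by
    intro j k l
    have hleft : (diagonal (Q.col j) * P * diagonal (S.col j) * (sinv P)ᵀ) k l =
        Q k j * (rowQuot P k l ᵥ* S) j := by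
      rw [mul_apply, vecMul, dotProduct, Finset.mul_sum]
      simp only [mul_diagonal, diagonal_mul, rowQuot, sinv, transpose_apply, of_apply, col_apply]
      exact Finset.sum_congr rfl fun i _ => by ring
    have hright : ((Fintype.card ι : ℂ) • (M * diagonal (Q.col j))) k l =
        Q k j * (((Fintype.card ι : ℂ) * M k l) • rowQuot Q l k) j := by
      have := hQ k j
      simp only [mul_diagonal, Matrix.smul_apply, Pi.smul_apply, smul_eq_mul, rowQuot, col_apply]
      field_simp
    rw [hleft, hright, mul_right_inj' (hQ k j)]
  simp only [isTheta_iff_mul_diagonal_mul, hP.mul_eq_iff, ← Matrix.ext_iff, entry, funext_iff]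
  exact ⟨fun h k l j => h j k l, fun h j k l => h k l j⟩

theorem isTheta_sinv_sinv_iff (hP : IsTypeII P) (hQ : ∀ i j, Q i j ≠ 0) :
    IsTheta (sinv P) (sinv Q) M S ↔ IsTheta P Q Mᵀ S := by
  rw [hP.isTheta_iff_rowQuot_vecMul hQ,
    (isTypeII_sinv hP).isTheta_iff_rowQuot_vecMul (sinv_ne_zero hQ), forall_comm]
  simp only [rowQuot_sinv, transpose_apply]

theorem IsTheta.comp (hP : IsTypeII P) (hQ : IsTypeII Q) (hR : ∀ i j, R i j ≠ 0)
    (hM : IsTheta P (sinv Q) M S) (hN : IsTheta Q R N T) :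
    IsTheta P R ((Fintype.card ι : ℂ) • (M ⊙ N)) (S * T) := by
  rw [hP.isTheta_iff_rowQuot_vecMul (isTypeII_sinv hQ).1] at hM
  rw [hQ.isTheta_iff_rowQuot_vecMul hR] at hN
  rw [hP.isTheta_iff_rowQuot_vecMul hR]
  intro k l
  rw [← vecMul_vecMul, hM k l, rowQuot_sinv, smul_vecMul, hN k l, smul_smul]
  congr 1
  simp only [Matrix.smul_apply, hadamard_apply, smul_eq_mul]
  ring

theorem IsTheta.left_unique (hP : IsUnit P) (hQ : ∀ i j, Q i j ≠ 0)
    (hM : IsTheta P Q M S) (hN : IsTheta P Q N S) : M = N := by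
  rw [isTheta_iff_mul_diagonal_mul] at hM hN
  ext k j
  have hunit : IsUnit (diagonal (Q.col j)) :=
    isUnit_diagonal.mpr (Pi.isUnit_iff.mpr fun i => (hQ i j).isUnit)
  have hMN : M * diagonal (Q.col j) * P = N * diagonal (Q.col j) * P :=
    (hM j).trans (hN j).symm
  rw [hunit.mul_left_injective (hP.mul_left_injective hMN)]

theorem IsTheta.commute (hP : IsUnit P) (hQ : ∀ i j, Q i j ≠ 0)
    (hM : IsTheta P Q M S) (hN : IsTheta P Q N T) : Commute M N :=
  (hM.mul hN).left_unique hP hQ (hadamard_comm T S ▸ hN.mul hM)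

end TypeII

section Paired

variable {ι : Type*} [Fintype ι] {A B H H₁ K K₁ : Matrix ι ι ℂ}

theorem Paired.inNomura (h : Paired A B H K) : InNomura A B H :=
  h.elim fun _ hS => hS.1.inNomura

theorem Paired.smul (c : ℂ) (h : Paired A B H K) : Paired A B (c • H) (c • K) := by
  obtain ⟨S, hH, hK⟩ := h
  exact ⟨c • S, hH.smul c, hK.smul c⟩

theorem Paired.mul (h : Paired A B H K) (h₁ : Paired A B H₁ K₁) :
    Paired A B (H * H₁) (K * K₁) := by
  obtain ⟨S, hH, hK⟩ := h
  obtain ⟨S₁, hH₁, hK₁⟩ := h₁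
  refine ⟨S ⊙ S₁, hH.mul hH₁, ?_⟩
  rw [transpose_mul, hadamard_comm]
  exact hK₁.mul hK

theorem Paired.commute_left [DecidableEq ι] (hA : IsUnit A) (hB : ∀ i j, B i j ≠ 0)
    (h : Paired A B H K) (h₁ : Paired A B H₁ K₁) : Commute H H₁ := by
  obtain ⟨S, hH, -⟩ := h
  obtain ⟨S₁, hH₁, -⟩ := h₁
  exact hH.commute hA hB hH₁

theorem Paired.commute_right [DecidableEq ι] (hA : IsUnit A) (hB : ∀ i j, B i j ≠ 0)
    (h : Paired A B H K) (h₁ : Paired A B H₁ K₁) : Commute K K₁ := by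
  obtain ⟨S, -, hK⟩ := h
  obtain ⟨S₁, -, hK₁⟩ := h₁
  have hcomm : Kᵀ * K₁ᵀ = K₁ᵀ * Kᵀ := hK.commute hA (fun i j => hB j i) hK₁
  rw [← transpose_mul, ← transpose_mul] at hcomm
  exact (transpose_injective hcomm).symm

end Paired

section JonesPair

theorem semiconjBy_of_braid {G : Type*} [Monoid G] {a y : Gˣ} {x : G}
    (hx : a * x * a = x * a * x) (hy : a * y * a = y * a * y) :
    SemiconjBy (a * x * ↑y⁻¹ * ↑a⁻¹) ↑y x := by
  have hconj : a * y⁻¹ * a⁻¹ = y⁻¹ * a⁻¹ * y := by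
    rw [mul_inv_eq_iff_eq_mul, mul_assoc, mul_assoc, eq_inv_mul_iff_mul_eq, eq_inv_mul_iff_mul_eq,
      ← mul_assoc, ← mul_assoc, hy, mul_inv_cancel_right]
  have hconj' : (a * ↑y⁻¹ * ↑a⁻¹ : G) = ↑y⁻¹ * ↑a⁻¹ * y := mod_cast congrArg Units.val hconj
  calc (a * x * ↑y⁻¹ * ↑a⁻¹ * y : G)
      = a * x * (↑y⁻¹ * ↑a⁻¹ * y) := by simp only [mul_assoc]
    _ = a * x * a * ↑y⁻¹ * ↑a⁻¹ := by rw [← hconj']; simp only [mul_assoc]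
    _ = x * (a * x * ↑y⁻¹ * ↑a⁻¹) := by rw [hx]; simp only [mul_assoc]

theorem card_mul_mul_eq_one_of_sum_eq_one {ι R : Type*} [Fintype ι] [CommRing R] {a u : ι → R}
    (hrow : ∀ i, ∑ j, a i * u j = 1) (hcol : ∀ j, ∑ i, a i * u j = 1) (i j : ι) :
    Fintype.card ι * (a i * u j) = 1 := by
  simp only [← Finset.mul_sum] at hrow
  have hconst : ∀ k, a k = a i := fun k =>
    calc a k = a k * (a i * ∑ j, u j) := by rw [hrow i, mul_one]
      _ = a i * (a k * ∑ j, u j) := mul_left_comm _ _ _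
      _ = a i := by rw [hrow k, mul_one]
  simpa [hconst] using hcol j

variable {ι : Type*} [Fintype ι] [DecidableEq ι] {A B : Matrix ι ι ℂ}

theorem IsJonesPair.isTheta (h : IsJonesPair A B) : IsTheta A B A B := by
  rw [isTheta_iff_mul_diagonal_mul]
  intro j
  ext k i
  have hbraid := congrFun₂ (h.2.2.1 (of fun p _ => Pi.single (M := fun _ => ℂ) i 1 p)) k j
  simpa [mul_apply, diagonal_apply, Pi.single_apply, Finset.sum_mul, mul_assoc] using hbraid

theorem IsJonesPair.mul_diagonal_mul (h : IsJonesPair A B) (j : ι) :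
    A * diagonal (B.col j) * A = diagonal (B.col j) * A * diagonal (B.col j) :=
  isTheta_iff_mul_diagonal_mul.mp h.isTheta j

theorem IsJonesPair.hadamard_inv_transpose_mul (h : IsJonesPair A B) :
    A ⊙ A⁻¹ᵀ * B = vecMulVec A.diag 1 := by
  ext k j
  have hA : A * A⁻¹ = 1 := mul_nonsing_inv A ((isUnit_iff_isUnit_det A).mp h.1)
  have hconj : A * diagonal (B.col j) =
      diagonal (B.col j) * (A * diagonal (B.col j) * A⁻¹) := by
    rw [← Matrix.mul_assoc, ← Matrix.mul_assoc, ← h.mul_diagonal_mul, Matrix.mul_assoc, hA,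
      Matrix.mul_one]
  have hdiag : A k k * B k j = B k j * (A * diagonal (B.col j) * A⁻¹) k k := by
    simpa [mul_diagonal, diagonal_mul] using congrFun₂ hconj k k
  have hentry : (A * diagonal (B.col j) * A⁻¹) k k = (A ⊙ A⁻¹ᵀ * B) k j := by
    rw [mul_apply, mul_apply]
    simp only [mul_diagonal, hadamard_apply, transpose_apply, col_apply, mul_right_comm]
  rw [← hentry, vecMulVec_apply, Pi.one_apply, mul_one, diag_apply]
  exact (mul_left_cancel₀ (h.2.1 k j) ((mul_comm _ _).trans hdiag)).symm

theorem isTypeII_of_card_mul_mul_inv_eq_one (hA : IsUnit A)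
    (h : ∀ i j, (Fintype.card ι : ℂ) * (A i j * A⁻¹ j i) = 1) : IsTypeII A := by
  refine ⟨fun i j => left_ne_zero_of_mul (right_ne_zero_of_mul_eq_one (h i j)), ?_⟩
  have hinv : (sinv A)ᵀ = (Fintype.card ι : ℂ) • A⁻¹ := by
    ext j i
    exact (eq_inv_of_mul_eq_one_right (by rw [← h i j, Matrix.smul_apply, smul_eq_mul]; ring)).symm
  rw [hinv, Matrix.mul_smul, mul_nonsing_inv A ((isUnit_iff_isUnit_det A).mp hA)]

theorem IsJonesPair.isTypeII_left (h : IsJonesPair A B) (hB : IsUnit B) : IsTypeII A := by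
  have hAdet : IsUnit A.det := (isUnit_iff_isUnit_det A).mp h.1
  have hrank_one : A ⊙ A⁻¹ᵀ = vecMulVec A.diag (1 ᵥ* B⁻¹) := by
    rw [← vecMulVec_mul, ← h.hadamard_inv_transpose_mul, Matrix.mul_assoc,
      mul_nonsing_inv B ((isUnit_iff_isUnit_det B).mp hB), Matrix.mul_one]
  have hentry : ∀ i j, A i j * A⁻¹ j i = A.diag i * (1 ᵥ* B⁻¹) j := congrFun₂ hrank_one
  refine isTypeII_of_card_mul_mul_inv_eq_one h.1 fun i j => ?_
  rw [hentry]
  refine card_mul_mul_eq_one_of_sum_eq_one (fun i => ?_) (fun j => ?_) i j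
  · simpa only [← hentry, mul_apply, one_apply_eq] using congrFun₂ (mul_nonsing_inv A hAdet) i i
  · simpa only [← hentry, mul_apply, one_apply_eq, mul_comm] using
      congrFun₂ (nonsing_inv_mul A hAdet) j j

theorem IsTypeII.card_mul_mul_diagonal_mul_inv_apply_self (hA : IsTypeII A) (d : ι → ℂ) (k : ι) :
    (Fintype.card ι : ℂ) * (A * diagonal d * A⁻¹) k k = ∑ l, d l := by
  have hinv : (Fintype.card ι : ℂ) • A⁻¹ = (sinv A)ᵀ := by
    rw [← hA.mul_eq_iff.mp (nonsing_inv_mul A ((isUnit_iff_isUnit_det A).mp hA.isUnit)),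
      Matrix.one_mul]
  rw [← smul_eq_mul, ← Matrix.smul_apply, ← Matrix.mul_smul, hinv]
  simp only [mul_apply (M := A * diagonal d), mul_diagonal, transpose_apply, sinv, of_apply]
  exact Finset.sum_congr rfl fun l _ => by rw [mul_right_comm, mul_inv_cancel₀ (hA.1 k l), one_mul]

theorem IsJonesPair.mul_sum_col_div_eq (h : IsJonesPair A B) (hB : IsUnit B) (i j k : ι) :
    (∑ l, B l i * (B l j)⁻¹) * B k j = B k i * ∑ l, B l i * (B l j)⁻¹ := by
  have hdiag : diagonal (B.col j) * diagonal ((sinv B).col j) = 1 := by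
    rw [diagonal_mul_diagonal, ← diagonal_one]
    exact congrArg diagonal (funext fun l => mul_inv_cancel₀ (h.2.1 l j))
  let a : (Matrix ι ι ℂ)ˣ := A.nonsingInvUnit ((isUnit_iff_isUnit_det A).mp h.1)
  let y : (Matrix ι ι ℂ)ˣ := ⟨_, _, hdiag, mul_eq_one_comm.mp hdiag⟩
  have hsemi : SemiconjBy (A * diagonal (B.col i) * diagonal ((sinv B).col j) * A⁻¹)
      (diagonal (B.col j)) (diagonal (B.col i)) :=
    semiconjBy_of_braid (a := a) (y := y) (h.mul_diagonal_mul i)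
      (Units.ext (h.mul_diagonal_mul j))
  rw [Matrix.mul_assoc A, diagonal_mul_diagonal] at hsemi
  have hkk := congrFun₂ hsemi.eq k k
  rw [mul_diagonal, diagonal_mul] at hkk
  have hsum := (h.isTypeII_left hB).card_mul_mul_diagonal_mul_inv_apply_self
    (fun l => B l i * (B l j)⁻¹) k
  rw [← hsum, mul_assoc, mul_left_comm (B k i)]
  exact congrArg _ hkk

theorem IsJonesPair.isTypeII_right (h : IsJonesPair A B) (hB : IsUnit B) : IsTypeII B := by
  refine ⟨h.2.1, mul_eq_card_smul_one_comm.mpr ?_⟩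
  ext j i
  have hentry : ((sinv B)ᵀ * B) j i = ∑ l, B l i * (B l j)⁻¹ := by
    simp [mul_apply, sinv, mul_comm]
  rw [hentry]
  obtain rfl | hij := eq_or_ne j i
  · simp [h.2.1]
  · rw [Matrix.smul_apply, one_apply_ne hij, smul_zero]
    by_contra hne
    have hcol : B.col j = B.col i := funext fun k =>
      mul_left_cancel₀ hne ((h.mul_sum_col_div_eq hB i j k).trans (mul_comm _ _))
    exact hij ((linearIndependent_cols_of_isUnit hB).injective hcol)

end JonesPair

section ThetaBlocks

/-- The `2 × 2` array of blocks `(a, r; s, t)` consists of the matrices `Θ_{P,P^(-)}(F)`,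
`Θ_{P,Q^(-)}(G)`; `Θ_{Q,P^(-)}(G)`, `Θ_{Q,Q^(-)}(F)`. For `P = A` and `Q = B^(-)` these are the
parts of the blocks of `M(F,G,H)` that come from `F` and `G`. -/
structure IsThetaBlocks {ι : Type*} [Fintype ι] (P Q F G a r s t : Matrix ι ι ℂ) : Prop where
  upperLeft : IsTheta P (sinv P) F a
  upperRight : IsTheta P (sinv Q) G r
  lowerLeft : IsTheta Q (sinv P) G s
  lowerRight : IsTheta Q (sinv Q) F t

namespace IsThetaBlocks

variable {ι : Type*} [Fintype ι] {P Q F F₁ G G₁ a a₁ r r₁ s s₁ t t₁ : Matrix ι ι ℂ}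

theorem unique (hP : ∀ i j, P i j ≠ 0) (hQ : ∀ i j, Q i j ≠ 0)
    (h : IsThetaBlocks P Q F G a r s t) (h₁ : IsThetaBlocks P Q F G a₁ r₁ s₁ t₁) :
    a = a₁ ∧ r = r₁ ∧ s = s₁ ∧ t = t₁ :=
  ⟨h.upperLeft.right_unique hP (sinv_ne_zero hP) h₁.upperLeft,
    h.upperRight.right_unique hP (sinv_ne_zero hQ) h₁.upperRight,
    h.lowerLeft.right_unique hQ (sinv_ne_zero hP) h₁.lowerLeft,
    h.lowerRight.right_unique hQ (sinv_ne_zero hQ) h₁.lowerRight⟩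

theorem smul (c : ℂ) (h : IsThetaBlocks P Q F G a r s t) :
    IsThetaBlocks P Q (c • F) (c • G) (c • a) (c • r) (c • s) (c • t) :=
  ⟨h.upperLeft.smul c, h.upperRight.smul c, h.lowerLeft.smul c, h.lowerRight.smul c⟩

variable [DecidableEq ι]

theorem mul (hP : IsTypeII P) (hQ : IsTypeII Q)
    (h : IsThetaBlocks P Q F G a r s t) (h₁ : IsThetaBlocks P Q F₁ G₁ a₁ r₁ s₁ t₁) :
    IsThetaBlocks P Q
      ((Fintype.card ι : ℂ) • (F ⊙ F₁) + (Fintype.card ι : ℂ) • (G ⊙ G₁))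
      ((Fintype.card ι : ℂ) • (F ⊙ G₁) + (Fintype.card ι : ℂ) • (G ⊙ F₁))
      (a * a₁ + r * s₁) (a * r₁ + r * t₁) (t * s₁ + s * a₁) (t * t₁ + s * r₁) := by
  have hP' := sinv_ne_zero hP.1
  have hQ' := sinv_ne_zero hQ.1
  exact
    { upperLeft := (h.upperLeft.comp hP hP hP' h₁.upperLeft).add
        (h.upperRight.comp hP hQ hP' h₁.lowerLeft)
      upperRight := (h.upperLeft.comp hP hP hQ' h₁.upperRight).add
        (h.upperRight.comp hP hQ hQ' h₁.lowerRight)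
      lowerLeft := (h.lowerRight.comp hQ hQ hP' h₁.lowerLeft).add
        (h.lowerLeft.comp hQ hP hP' h₁.upperLeft)
      lowerRight := (h.lowerRight.comp hQ hQ hQ' h₁.lowerRight).add
        (h.lowerLeft.comp hQ hP hQ' h₁.upperRight) }

theorem two_smul_mul (hP : IsTypeII P) (hQ : IsTypeII Q)
    (h : IsThetaBlocks P Q F G a r s t) (h₁ : IsThetaBlocks P Q F₁ G₁ a₁ r₁ s₁ t₁) :
    IsThetaBlocks P Q
      ((2 * (Fintype.card ι : ℂ)) • (F ⊙ F₁) + (2 * (Fintype.card ι : ℂ)) • (G ⊙ G₁))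
      ((2 * (Fintype.card ι : ℂ)) • (F ⊙ G₁) + (2 * (Fintype.card ι : ℂ)) • (G ⊙ F₁))
      ((2 : ℂ) • (a * a₁ + r * s₁)) ((2 : ℂ) • (a * r₁ + r * t₁))
      ((2 : ℂ) • (t * s₁ + s * a₁)) ((2 : ℂ) • (t * t₁ + s * r₁)) := by
  simpa only [smul_add, smul_smul] using (h.mul hP hQ h₁).smul 2

end IsThetaBlocks

theorem isThetaBlocks_sinv_right_iff {ι : Type*} [Fintype ι] [DecidableEq ι]
    {A B F G a r s t : Matrix ι ι ℂ} (hA : IsTypeII A) (hB : ∀ i j, B i j ≠ 0) :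
    IsThetaBlocks A (sinv B) F G a r s t ↔
      IsTheta A (sinv A) F a ∧ IsTheta A B G r ∧ IsTheta A B Gᵀ sᵀ ∧
        IsTheta (sinv B) (sinv (sinv B)) F t := by
  have hlower : IsTheta (sinv B) (sinv A) G s ↔ IsTheta A B Gᵀ sᵀ := by
    rw [← isTheta_sinv_sinv_iff hA hB]
    exact ⟨IsTheta.swap, IsTheta.swap⟩
  rw [← hlower]
  refine ⟨fun h => ⟨h.upperLeft, ?_, h.lowerLeft, h.lowerRight⟩,
    fun ⟨hF, hG, hG', hF'⟩ => ⟨hF, ?_, hG', hF'⟩⟩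
  · simpa only [sinv_sinv] using h.upperRight
  · simpa only [sinv_sinv] using hG

end ThetaBlocks

section BlockMatrix

variable {n : ℕ}

theorem blockMat_eq_compRingEquiv (P Q R S T U : Matrix (Fin n) (Fin n) ℂ) :
    blockMat P Q R S T U =
      compRingEquiv (Fin 4) (Fin n) ℂ !![P, Q, R, R; Q, P, R, R; S, S, T, U; S, S, U, T] :=
  rfl

theorem blockMat_add_sub_mul (a a₁ h h₁ r r₁ s s₁ t t₁ k k₁ : Matrix (Fin n) (Fin n) ℂ) :
    blockMat (a + h) (a - h) r s (t + k) (t - k) *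
        blockMat (a₁ + h₁) (a₁ - h₁) r₁ s₁ (t₁ + k₁) (t₁ - k₁) =
      blockMat ((2 : ℂ) • (a * a₁ + r * s₁) + (2 : ℂ) • (h * h₁))
        ((2 : ℂ) • (a * a₁ + r * s₁) - (2 : ℂ) • (h * h₁))
        ((2 : ℂ) • (a * r₁ + r * t₁)) ((2 : ℂ) • (t * s₁ + s * a₁))
        ((2 : ℂ) • (t * t₁ + s * r₁) + (2 : ℂ) • (k * k₁))
        ((2 : ℂ) • (t * t₁ + s * r₁) - (2 : ℂ) • (k * k₁)) := by
  simp only [blockMat_eq_compRingEquiv, ← map_mul, two_smul]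
  congr 1
  ext1 x y
  rw [mul_apply, Fin.sum_univ_four]
  fin_cases x <;> fin_cases y <;>
    simp only [of_apply, cons_val', cons_val, Fin.reduceFinMk] <;>
    noncomm_ring

theorem IsThetaBlocks.commute_blockMat
    {P Q F F₁ G G₁ a a₁ r r₁ s s₁ t t₁ H H₁ K K₁ : Matrix (Fin n) (Fin n) ℂ}
    (hP : IsTypeII P) (hQ : IsTypeII Q)
    (h : IsThetaBlocks P Q F G a r s t) (h₁ : IsThetaBlocks P Q F₁ G₁ a₁ r₁ s₁ t₁)
    (hH : Commute H H₁) (hK : Commute K K₁) :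
    Commute (blockMat (a + H) (a - H) r s (t + K) (t - K))
      (blockMat (a₁ + H₁) (a₁ - H₁) r₁ s₁ (t₁ + K₁) (t₁ - K₁)) := by
  have hswap := h₁.mul hP hQ h
  rw [hadamard_comm F₁ F, hadamard_comm G₁ G, hadamard_comm F₁ G, hadamard_comm G₁ F,
    add_comm (_ • (G ⊙ F₁))] at hswap
  obtain ⟨ha, hr, hs, ht⟩ := (h.mul hP hQ h₁).unique hP.1 hQ.1 hswap
  rw [Commute, SemiconjBy, blockMat_add_sub_mul, blockMat_add_sub_mul, ha, hr, hs, ht, hH.eq, hK.eq]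

end BlockMatrix

theorem blockMat_mul_general {n : ℕ} {A B : Matrix (Fin n) (Fin n) ℂ}
    (hA : IsTypeII A) (hB : IsTypeII B)
    {F F₁ G G₁ H H₁ K K₁ SF SF₁ TF TF₁ SG SG₁ SGt SG₁t : Matrix (Fin n) (Fin n) ℂ}
    (hSF : IsTheta A (sinv A) F SF) (hSF₁ : IsTheta A (sinv A) F₁ SF₁)
    (hTF : IsTheta (sinv B) (sinv (sinv B)) F TF)
    (hTF₁ : IsTheta (sinv B) (sinv (sinv B)) F₁ TF₁)
    (hSG : IsTheta A B G SG) (hSG₁ : IsTheta A B G₁ SG₁)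
    (hSGt : IsTheta A B Gᵀ SGt) (hSG₁t : IsTheta A B G₁ᵀ SG₁t)
    (hHK : Paired A B H K) (hHK₁ : Paired A B H₁ K₁) :
    InNomura A (sinv A)
      ((2 * (n : ℂ)) • (F ⊙ F₁) + (2 * (n : ℂ)) • (G ⊙ G₁)) ∧
    InNomura A B ((2 * (n : ℂ)) • (F ⊙ G₁) + (2 * (n : ℂ)) • (G ⊙ F₁)) ∧
    InNomura A B ((2 : ℂ) • (H * H₁)) ∧
    Paired A B ((2 : ℂ) • (H * H₁)) ((2 : ℂ) • (K * K₁)) ∧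
    (∃ SF' TF' SG' SG't : Matrix (Fin n) (Fin n) ℂ,
      IsTheta A (sinv A)
        ((2 * (n : ℂ)) • (F ⊙ F₁) + (2 * (n : ℂ)) • (G ⊙ G₁)) SF' ∧
      IsTheta (sinv B) (sinv (sinv B))
        ((2 * (n : ℂ)) • (F ⊙ F₁) + (2 * (n : ℂ)) • (G ⊙ G₁)) TF' ∧
      IsTheta A B ((2 * (n : ℂ)) • (F ⊙ G₁) + (2 * (n : ℂ)) • (G ⊙ F₁)) SG' ∧
      IsTheta A B ((2 * (n : ℂ)) • (F ⊙ G₁) + (2 * (n : ℂ)) • (G ⊙ F₁))ᵀ SG't ∧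
      blockMat (SF + H) (SF - H) SG SGtᵀ (TF + K) (TF - K) *
          blockMat (SF₁ + H₁) (SF₁ - H₁) SG₁ SG₁tᵀ (TF₁ + K₁) (TF₁ - K₁) =
        blockMat (SF' + (2 : ℂ) • (H * H₁)) (SF' - (2 : ℂ) • (H * H₁)) SG' SG'tᵀ
          (TF' + (2 : ℂ) • (K * K₁)) (TF' - (2 : ℂ) • (K * K₁))) ∧
    blockMat (SF + H) (SF - H) SG SGtᵀ (TF + K) (TF - K) *
        blockMat (SF₁ + H₁) (SF₁ - H₁) SG₁ SG₁tᵀ (TF₁ + K₁) (TF₁ - K₁) =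
      blockMat (SF₁ + H₁) (SF₁ - H₁) SG₁ SG₁tᵀ (TF₁ + K₁) (TF₁ - K₁) *
        blockMat (SF + H) (SF - H) SG SGtᵀ (TF + K) (TF - K) := by
  have hB' := isTypeII_sinv hB
  have hblocks : IsThetaBlocks A (sinv B) F G SF SG SGtᵀ TF :=
    (isThetaBlocks_sinv_right_iff hA hB.1).mpr ⟨hSF, hSG, hSGt, hTF⟩
  have hblocks₁ : IsThetaBlocks A (sinv B) F₁ G₁ SF₁ SG₁ SG₁tᵀ TF₁ :=
    (isThetaBlocks_sinv_right_iff hA hB.1).mpr ⟨hSF₁, hSG₁, hSG₁t, hTF₁⟩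
  have hproduct := hblocks.two_smul_mul hA hB' hblocks₁
  rw [Fintype.card_fin, isThetaBlocks_sinv_right_iff hA hB.1] at hproduct
  obtain ⟨hF, hG, hGt, hF'⟩ := hproduct
  have hpaired := (hHK.mul hHK₁).smul 2
  have hHH₁ := hHK.commute_left hA.isUnit hB.1 hHK₁
  have hKK₁ := hHK.commute_right hA.isUnit hB.1 hHK₁
  refine ⟨hF.inNomura, hG.inNomura, hpaired.inNomura, hpaired,
    ⟨_, _, _, _, hF, hF', hG, hGt, ?_⟩, hblocks.commute_blockMat hA hB' hblocks₁ hHH₁ hKK₁⟩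
  rw [transpose_transpose, blockMat_add_sub_mul]

theorem blockMat_mul {n : ℕ} (hn : 0 < n) (A B : Matrix (Fin n) (Fin n) ℂ)
    (h : IsInvertibleJonesPair A B) (hAs : Aᵀ = A)
    (F F₁ G G₁ H H₁ K K₁ SF SF₁ TF TF₁ SG SG₁ SGt SG₁t : Matrix (Fin n) (Fin n) ℂ)
    (hSF : IsTheta A (sinv A) F SF) (hSF₁ : IsTheta A (sinv A) F₁ SF₁)
    (hTF : IsTheta (sinv B) (sinv (sinv B)) F TF)
    (hTF₁ : IsTheta (sinv B) (sinv (sinv B)) F₁ TF₁)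
    (hSG : IsTheta A B G SG) (hSG₁ : IsTheta A B G₁ SG₁)
    (hSGt : IsTheta A B Gᵀ SGt) (hSG₁t : IsTheta A B G₁ᵀ SG₁t)
    (hHK : Paired A B H K) (hHK₁ : Paired A B H₁ K₁) :
    InNomura A (sinv A)
      ((2 * (n : ℂ)) • (F ⊙ F₁) + (2 * (n : ℂ)) • (G ⊙ G₁)) ∧
    InNomura A B ((2 * (n : ℂ)) • (F ⊙ G₁) + (2 * (n : ℂ)) • (G ⊙ F₁)) ∧
    InNomura A B ((2 : ℂ) • (H * H₁)) ∧
    Paired A B ((2 : ℂ) • (H * H₁)) ((2 : ℂ) • (K * K₁)) ∧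
    (∃ SF' TF' SG' SG't : Matrix (Fin n) (Fin n) ℂ,
      IsTheta A (sinv A)
        ((2 * (n : ℂ)) • (F ⊙ F₁) + (2 * (n : ℂ)) • (G ⊙ G₁)) SF' ∧
      IsTheta (sinv B) (sinv (sinv B))
        ((2 * (n : ℂ)) • (F ⊙ F₁) + (2 * (n : ℂ)) • (G ⊙ G₁)) TF' ∧
      IsTheta A B ((2 * (n : ℂ)) • (F ⊙ G₁) + (2 * (n : ℂ)) • (G ⊙ F₁)) SG' ∧
      IsTheta A B ((2 * (n : ℂ)) • (F ⊙ G₁) + (2 * (n : ℂ)) • (G ⊙ F₁))ᵀ SG't ∧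
      blockMat (SF + H) (SF - H) SG SGtᵀ (TF + K) (TF - K) *
          blockMat (SF₁ + H₁) (SF₁ - H₁) SG₁ SG₁tᵀ (TF₁ + K₁) (TF₁ - K₁) =
        blockMat (SF' + (2 : ℂ) • (H * H₁)) (SF' - (2 : ℂ) • (H * H₁)) SG' SG'tᵀ
          (TF' + (2 : ℂ) • (K * K₁)) (TF' - (2 : ℂ) • (K * K₁))) ∧
    blockMat (SF + H) (SF - H) SG SGtᵀ (TF + K) (TF - K) *
        blockMat (SF₁ + H₁) (SF₁ - H₁) SG₁ SG₁tᵀ (TF₁ + K₁) (TF₁ - K₁) =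
      blockMat (SF₁ + H₁) (SF₁ - H₁) SG₁ SG₁tᵀ (TF₁ + K₁) (TF₁ - K₁) *
        blockMat (SF + H) (SF - H) SG SGtᵀ (TF + K) (TF - K) :=
  blockMat_mul_general (h.1.isTypeII_left h.2.2) (h.1.isTypeII_right h.2.2)
    hSF hSF₁ hTF hTF₁ hSG hSG₁ hSGt hSG₁t hHK hHK₁
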